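/- Let A be a constant rank first-order operator and let u ∈ L^p(Ω;ℝ^N) be the high-contrast limit of a family {u_ε} ⊂ L^p(Ω;ℝ^N): explicitly, εu_ε ⇀ 0 weakly in L^p(Ω;ℝ^N) and there is {ũ_ε} ⊂ L^p(Ω;ℝ^N) with A ũ_ε = 0 in W^{−1,p}(Ω;ℝ^M), ũ_ε ⇀ u weakly in L^p(Ω;ℝ^N), and u_ε = ũ_ε in Ω_{1,ε}. Suppose sup_ε F_ε(u_ε) ≤ c for some c ≥ −aλℒ^d(Ω) and set v_ε = u_ε − ũ_ε. Then: A u = 0 in W^{−1,p}(Ω;ℝ^M); v_ε = 0 in Ω_{1,ε}; A v_ε = 0 in W^{−1,p}(Ω;ℝ^M); εv_ε ⇀ 0 weakly in L^p(Ω;ℝ^N); liminf_{ε→0} F_{0,ε}(v_ε) + liminf_{ε→0} F_{1,ε}(ũ_ε) ≤ liminf_{ε→0} F_ε(u_ε); and limsup_{ε→0} F_ε(u_ε) ≤ limsup_{ε→0} F_{0,ε}(v_ε) + limsup_{ε→0} F_{1,ε}(ũ_ε). -/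

import Mathlib

open MeasureTheory Filter Topology Metric Set
open scoped ENNReal NNReal

noncomputable section

attribute [local instance] Classical.propDecidable

namespace HC

abbrev Rd (d : ℕ) := Fin d → ℝ
abbrev Vec (N : ℕ) := Fin N → ℝ

/-- Euclidean inner product on `ℝ^N`. -/
def dot {N : ℕ} (u v : Vec N) : ℝ := ∑ j, u j * v j

/-- Euclidean norm on `ℝ^N`. -/
def eN {N : ℕ} (ξ : Vec N) : ℝ := Real.sqrt (∑ j, ξ j ^ 2)

/-- The open unit cube `Q = (0,1)^d`. -/
def Qcube (d : ℕ) : Set (Rd d) := {x | ∀ i, x i ∈ Set.Ioo (0 : ℝ) 1}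

/-- Translation by an integer vector. -/
def tr {d : ℕ} (z : Fin d → ℤ) (x : Rd d) : Rd d := fun i => x i + (z i : ℝ)

/-- The cell `ε (S + z)`. -/
def cell {d : ℕ} (ε : ℝ) (z : Fin d → ℤ) (S : Set (Rd d)) : Set (Rd d) :=
  (fun y : Rd d => fun i => ε * (y i + (z i : ℝ))) '' S

/-- The union of the soft inclusions `Ω_{0,ε}`. -/
def softPart {d : ℕ} (ε : ℝ) (Ω D0 : Set (Rd d)) : Set (Rd d) :=
  ⋃ z ∈ {z : Fin d → ℤ | cell ε z D0 ⊆ Ω}, cell ε z D0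

/-- The stiff matrix `Ω_{1,ε}`. -/
def stiffPart {d : ℕ} (ε : ℝ) (Ω D0 : Set (Rd d)) : Set (Rd d) := Ω \ softPart ε Ω D0

/-- `Ω̂_ε`, the union of the ε-cubes contained in `Ω`. -/
def hatOmega {d : ℕ} (ε : ℝ) (Ω : Set (Rd d)) : Set (Rd d) :=
  ⋃ z ∈ {z : Fin d → ℤ | cell ε z (Qcube d) ⊆ Ω}, cell ε z (Qcube d)

/-- `Q`-periodicity of a map defined on `ℝ^d`. -/
def Zper {d : ℕ} {α : Type*} (u : Rd d → α) : Prop :=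
  ∀ (x : Rd d) (z : Fin d → ℤ), u (tr z x) = u x

/-- A local Lipschitz-graph description of `Ω` near the point `x`:  after an orthogonal
change of coordinates, `Ω` is locally the epigraph of a Lipschitz function. -/
def LipschitzGraphAt {d : ℕ} (Ω : Set (Rd d)) (x : Rd d) : Prop :=
  ∃ (L : Rd d ≃ₗ[ℝ] Rd d) (i : Fin d) (φ : Rd d → ℝ) (K : ℝ≥0) (r : ℝ),
    0 < r ∧ (∀ y z : Rd d, dot (L y) (L z) = dot y z) ∧ LipschitzWith K φ ∧
    (∀ y t, φ (Function.update y i t) = φ y) ∧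
    (∀ y ∈ Metric.ball x r, (y ∈ Ω ↔ φ (L y) < L y i))

/-- `Ω` has Lipschitz boundary. -/
def HasLipschitzBoundary {d : ℕ} (Ω : Set (Rd d)) : Prop :=
  ∀ x ∈ frontier Ω, LipschitzGraphAt Ω x

/-- Compact containment `Ω' ⋐ Ω`. -/
def CpctIn {d : ℕ} (Ω' Ω : Set (Rd d)) : Prop :=
  IsOpen Ω' ∧ IsCompact (closure Ω') ∧ closure Ω' ⊆ Ω

/-- The standing geometric assumptions: `d ≥ 2`, `Ω` bounded connected open Lipschitz,
`D₀ ⋐ Q` open connected Lipschitz. -/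
def GoodSetting (d : ℕ) (Ω D0 : Set (Rd d)) : Prop :=
  2 ≤ d ∧ IsOpen Ω ∧ IsConnected Ω ∧ Bornology.IsBounded Ω ∧ HasLipschitzBoundary Ω ∧
    IsOpen D0 ∧ IsConnected D0 ∧ HasLipschitzBoundary D0 ∧
    IsCompact (closure D0) ∧ closure D0 ⊆ Qcube d

/-! ## First-order constant-coefficient operators -/

/-- The pointwise value of the formal adjoint:
`(𝒜*ψ)(x) = - ∑ i (A^{(i)})^T ∂ψ/∂x_i (x)`. -/
def adjApply {d N M : ℕ} (A : Fin d → (Vec N →ₗ[ℝ] Vec M)) (ψ : Rd d → Vec M)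
    (x : Rd d) : Vec N :=
  fun n => -∑ i, dot (A i (Pi.single n 1)) (fderiv ℝ ψ x (Pi.single i 1))

/-- Smooth test functions compactly supported in `O`. -/
def TestOn {d M : ℕ} (O : Set (Rd d)) (ψ : Rd d → Vec M) : Prop :=
  ContDiff ℝ (⊤ : ℕ∞) ψ ∧ HasCompactSupport ψ ∧ tsupport ψ ⊆ O

/-- `𝒜 u = 0` in `W^{-1,p}(O)`, i.e. distributionally on `O`. -/
def AFreeOn {d N M : ℕ} (A : Fin d → (Vec N →ₗ[ℝ] Vec M)) (O : Set (Rd d))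
    (u : Rd d → Vec N) : Prop :=
  ∀ ψ : Rd d → Vec M, TestOn O ψ → ∫ x in O, dot (u x) (adjApply A ψ x) = 0

/-- `𝒜 u = 0` on the torus `𝕋^d` (with `Q`-periodic test functions). -/
def AFreeTorus {d N M : ℕ} (A : Fin d → (Vec N →ₗ[ℝ] Vec M)) (u : Rd d → Vec N) : Prop :=
  ∀ ψ : Rd d → Vec M, ContDiff ℝ (⊤ : ℕ∞) ψ → Zper ψ →
    ∫ x in Qcube d, dot (u x) (adjApply A ψ x) = 0

/-- The symbol `𝔸[ω] = ∑ i ω_i A^{(i)}`. -/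
def symb {d N M : ℕ} (A : Fin d → (Vec N →ₗ[ℝ] Vec M)) (ω : Rd d) : Vec N →ₗ[ℝ] Vec M :=
  ∑ i, ω i • A i

/-- Murat's constant rank condition. -/
def ConstantRank {d N M : ℕ} (A : Fin d → (Vec N →ₗ[ℝ] Vec M)) : Prop :=
  ∃ r : ℕ, ∀ ω : Rd d, ω ≠ 0 → Module.finrank ℝ (LinearMap.range (symb A ω)) = r

/-! ## Lp spaces and convergences -/

def MemLpOn {d N : ℕ} (p : ℝ) (O : Set (Rd d)) (u : Rd d → Vec N) : Prop :=
  MemLp u (ENNReal.ofReal p) (volume.restrict O)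

def LpNormOn {d N : ℕ} (p : ℝ) (O : Set (Rd d)) (u : Rd d → Vec N) : ℝ :=
  (eLpNorm (fun x => eN (u x)) (ENNReal.ofReal p) (volume.restrict O)).toReal

/-- The conjugate exponent `p' = p/(p-1)`. -/
def conjExp (p : ℝ) : ℝ := p / (p - 1)

/-- Weak convergence in `L^p(O; ℝ^N)` of a family along a filter. -/
def WeakLpTendsto {d N : ℕ} (p : ℝ) (O : Set (Rd d)) {ι : Type*} (l : Filter ι)
    (u : ι → Rd d → Vec N) (v : Rd d → Vec N) : Prop :=
  ∀ g : Rd d → Vec N, MemLpOn (conjExp p) O g →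
    Tendsto (fun k => ∫ x in O, dot (u k x) (g x)) l (𝓝 (∫ x in O, dot (v x) (g x)))

/-- `p`-equiintegrability of a family in `L^p(O)`. -/
def PEquiintegrable {d N : ℕ} (p : ℝ) (O : Set (Rd d)) {ι : Type*}
    (u : ι → Rd d → Vec N) : Prop :=
  ∀ η : ℝ, 0 < η → ∃ m : ℝ, 0 < m ∧ ∀ (k : ι) (E : Set (Rd d)), MeasurableSet E → E ⊆ O →
    volume E < ENNReal.ofReal m → ∫ x in E, eN (u k x) ^ p < η

/-- Membership in `L^p(Ω × Q; ℝ^N)`. -/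
def MemLpProd {d N : ℕ} (p : ℝ) (Ω : Set (Rd d)) (v : Rd d → Rd d → Vec N) : Prop :=
  MemLp (fun q : Rd d × Rd d => v q.1 q.2) (ENNReal.ofReal p)
    ((volume.restrict Ω).prod (volume.restrict (Qcube d)))

def LpNormProd {d N : ℕ} (p : ℝ) (Ω : Set (Rd d)) (v : Rd d → Rd d → Vec N) : ℝ :=
  (eLpNorm (fun q : Rd d × Rd d => eN (v q.1 q.2)) (ENNReal.ofReal p)
    ((volume.restrict Ω).prod (volume.restrict (Qcube d)))).toReal

/-- `p`-equiintegrability of a family in `L^p(Ω × Q)`. -/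
def PEquiintegrableProd {d N : ℕ} (p : ℝ) (Ω : Set (Rd d)) {ι : Type*}
    (w : ι → Rd d → Rd d → Vec N) : Prop :=
  ∀ η : ℝ, 0 < η → ∃ m : ℝ, 0 < m ∧ ∀ (k : ι) (E : Set (Rd d × Rd d)), MeasurableSet E →
    ((volume.restrict Ω).prod (volume.restrict (Qcube d))) E < ENNReal.ofReal m →
    ∫ q in E, eN (w k q.1 q.2) ^ p
        ∂((volume.restrict Ω).prod (volume.restrict (Qcube d))) < η

/-! ## Two-scale convergence and unfolding -/

/-- `x ↦ sup_{y ∈ Q̄} |g(x,y)|`. -/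
def perSup {d N : ℕ} (g : Rd d → Rd d → Vec N) (x : Rd d) : ℝ :=
  sSup ((fun y => eN (g x y)) '' closure (Qcube d))

/-- Test functions for two-scale convergence: elements of `L^{p'}(Ω; C_per(ℝ^d;ℝ^N))`. -/
def TwoScaleTest {d N : ℕ} (p : ℝ) (Ω : Set (Rd d)) (g : Rd d → Rd d → Vec N) : Prop :=
  (∀ x, Continuous (g x)) ∧ (∀ x, Zper (g x)) ∧
    MemLp (perSup g) (ENNReal.ofReal (conjExp p)) (volume.restrict Ω)

/-- Weak two-scale convergence in `L^p`, along a filter `l` with scales `η`. -/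
def WeakTwoScale {d N : ℕ} (p : ℝ) (Ω : Set (Rd d)) {ι : Type*} (l : Filter ι) (η : ι → ℝ)
    (u : ι → Rd d → Vec N) (v : Rd d → Rd d → Vec N) : Prop :=
  ∀ g : Rd d → Rd d → Vec N, TwoScaleTest p Ω g →
    Tendsto (fun k => ∫ x in Ω, dot (u k x) (g x ((η k)⁻¹ • x))) l
      (𝓝 (∫ x in Ω, ∫ y in Qcube d, dot (v x y) (g x y)))

/-- Strong two-scale convergence in `L^p`. -/
def StrongTwoScale {d N : ℕ} (p : ℝ) (Ω : Set (Rd d)) {ι : Type*} (l : Filter ι) (η : ι → ℝ)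
    (u : ι → Rd d → Vec N) (v : Rd d → Rd d → Vec N) : Prop :=
  WeakTwoScale p Ω l η u v ∧ Tendsto (fun k => LpNormOn p Ω (u k)) l (𝓝 (LpNormProd p Ω v))

/-- The unfolding operator `S_ε v (x,y) = ṽ(ε⌊x/ε⌋ + εy)`, where `ṽ` is the extension of `v`
by `0` outside `Ω`. -/
def unfold {d N : ℕ} (ε : ℝ) (Ω : Set (Rd d)) (v : Rd d → Vec N) :
    Rd d → Rd d → Vec N :=
  fun x y => Set.indicator Ω v (fun i => ε * ((⌊x i / ε⌋ : ℝ) + y i))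

/-! ## The energy densities and their hypotheses -/

def H1soft {N : ℕ} (f0 : ℝ → Vec N → ℝ) : Prop := ∀ ε : ℝ, 0 < ε → Continuous (f0 ε)

def H1stiff {d N : ℕ} (f1 : Rd d → Vec N → ℝ) : Prop :=
  (∀ ξ, Measurable fun x => f1 x ξ) ∧ ∀ x, Continuous (f1 x)

def H2 {d N : ℕ} (f1 : Rd d → Vec N → ℝ) : Prop :=
  ∀ (x : Rd d) (z : Fin d → ℤ) (ξ : Vec N), f1 (tr z x) ξ = f1 x ξ

def H3soft {N : ℕ} (p a lam Lam : ℝ) (f0 : ℝ → Vec N → ℝ) : Prop :=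
  0 < a ∧ 0 < lam ∧ 0 < Lam ∧
    ∀ ε : ℝ, 0 < ε → ∀ ξ, lam * (-a + eN ξ ^ p) ≤ f0 ε ξ ∧ f0 ε ξ ≤ Lam * (1 + eN ξ ^ p)

def H3stiff {d N : ℕ} (p a lam Lam : ℝ) (f1 : Rd d → Vec N → ℝ) : Prop :=
  0 < a ∧ 0 < lam ∧ 0 < Lam ∧
    ∀ (x : Rd d) (ξ : Vec N), lam * (-a + eN ξ ^ p) ≤ f1 x ξ ∧ f1 x ξ ≤ Lam * (1 + eN ξ ^ p)

def H4soft {N : ℕ} (p mu : ℝ) (f0 : ℝ → Vec N → ℝ) : Prop :=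
  0 < mu ∧ ∀ ε : ℝ, 0 < ε → ∀ ξ ζ : Vec N,
    |f0 ε ξ - f0 ε ζ| ≤ mu * (1 + eN ξ ^ (p - 1) + eN ζ ^ (p - 1)) * eN (ξ - ζ)

def H4stiff {d N : ℕ} (p mu : ℝ) (f1 : Rd d → Vec N → ℝ) : Prop :=
  0 < mu ∧ ∀ (x : Rd d) (ξ ζ : Vec N),
    |f1 x ξ - f1 x ζ| ≤ mu * (1 + eN ξ ^ (p - 1) + eN ζ ^ (p - 1)) * eN (ξ - ζ)

def H5 {N : ℕ} (f0 : ℝ → Vec N → ℝ) (f0lim : Vec N → ℝ) : Prop :=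
  ∀ ξ, Tendsto (fun ε => f0 ε ξ) (𝓝[>] (0 : ℝ)) (𝓝 (f0lim ξ))

/-! ## The admissible class: Assumptions 1 and 2 -/

/-- Assumption 1 (null average). -/
def NullAverage {d N M : ℕ} (p : ℝ) (A : Fin d → (Vec N →ₗ[ℝ] Vec M))
    (D0 : Set (Rd d)) : Prop :=
  ∀ u : Rd d → Vec N, MemLp u (ENNReal.ofReal p) (volume.restrict (Qcube d)) → Zper u →
    (∀ᵐ y ∂volume.restrict (Qcube d \ D0), u y = 0) → AFreeTorus A u →
    (∫ y in Qcube d, u y) = 0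

/-- Assumption 2 (`𝒜`-free extension operators on the perforated domains). -/
def ExtensionProperty {d N M : ℕ} (p : ℝ) (A : Fin d → (Vec N →ₗ[ℝ] Vec M))
    (Ω D0 : Set (Rd d)) (c : ℝ) (E : ℝ → (Rd d → Vec N) → (Rd d → Vec N)) : Prop :=
  0 < c ∧
  (∀ ε : ℝ, 0 < ε → ∀ u : Rd d → Vec N, MemLpOn p Ω u → AFreeOn A Ω u →
    (∀ᵐ x ∂volume.restrict (stiffPart ε Ω D0), E ε u x = u x) ∧
    MemLpOn p Ω (E ε u) ∧
    LpNormOn p Ω (E ε u) ≤ c * LpNormOn p (stiffPart ε Ω D0) u ∧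
    AFreeOn A Ω (E ε u)) ∧
  (∀ u : ℝ → Rd d → Vec N, (∀ ε : ℝ, 0 < ε → MemLpOn p Ω (u ε) ∧ AFreeOn A Ω (u ε)) →
    PEquiintegrable p Ω (fun ε : {ε : ℝ // 0 < ε} => u ε.1) →
    PEquiintegrable p Ω (fun ε : {ε : ℝ // 0 < ε} => E ε.1 (u ε.1)))

/-- An admissible operator: constant rank together with Assumptions 1 and 2. -/
def Admissible {d N M : ℕ} (p : ℝ) (A : Fin d → (Vec N →ₗ[ℝ] Vec M))
    (Ω D0 : Set (Rd d)) : Prop :=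
  ConstantRank A ∧ NullAverage p A D0 ∧ ∃ c E, ExtensionProperty p A Ω D0 c E

/-! ## High-contrast convergence -/

/-- High-contrast convergence of a family `u` (with scales `η`) to `v`. -/
def HCTendsto {d N M : ℕ} (p : ℝ) (A : Fin d → (Vec N →ₗ[ℝ] Vec M)) (Ω D0 : Set (Rd d))
    {ι : Type*} (l : Filter ι) (η : ι → ℝ) (u : ι → Rd d → Vec N) (v : Rd d → Vec N) : Prop :=
  WeakLpTendsto p Ω l (fun k x => η k • u k x) 0 ∧
  ∃ ut : ι → Rd d → Vec N,
    (∀ k, MemLpOn p Ω (ut k) ∧ AFreeOn A Ω (ut k)) ∧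
    (∀ k, ∀ᵐ x ∂volume.restrict (stiffPart (η k) Ω D0), u k x = ut k x) ∧
    WeakLpTendsto p Ω l ut v

/-! ## The functionals -/

def U1 {d N M : ℕ} (p : ℝ) (A : Fin d → (Vec N →ₗ[ℝ] Vec M)) (Ω : Set (Rd d)) :
    Set (Rd d → Vec N) :=
  {u | MemLpOn p Ω u ∧ AFreeOn A Ω u}

def U0 {d N M : ℕ} (p : ℝ) (A : Fin d → (Vec N →ₗ[ℝ] Vec M)) (Ω D0 Ω' : Set (Rd d)) :
    Set (Rd d → Rd d → Vec N) :=
  {u | MemLpProd p Ω u ∧ (∀ x, Zper (u x)) ∧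
    (∀ x, ∀ᵐ y ∂volume.restrict (Qcube d \ D0), u x y = 0) ∧
    (∀ᵐ x ∂volume.restrict Ω', AFreeTorus A (u x))}

/-- The constant `α₀`. -/
def alpha0 {d N M : ℕ} (p : ℝ) (A : Fin d → (Vec N →ₗ[ℝ] Vec M)) (Ω D0 : Set (Rd d))
    (f0lim : Vec N → ℝ) : ℝ :=
  sSup {c : ℝ | ∃ Ω' : Set (Rd d), CpctIn Ω' Ω ∧
    c = sInf {e : ℝ | ∃ u ∈ U0 p A Ω D0 Ω', e = ∫ x in Ω', ∫ y in D0, f0lim (u x y)}}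

/-- The `ℤ^d`-periodization of `D₁ = Q ∖ D₀`. -/
def D1per {d : ℕ} (D0 : Set (Rd d)) : Set (Rd d) :=
  ⋃ z : Fin d → ℤ, tr z '' (Qcube d \ D0)

/-- The homogenized stiff energy density `f_hom`. -/
def fhom {d N M : ℕ} (p : ℝ) (A : Fin d → (Vec N →ₗ[ℝ] Vec M)) (D0 : Set (Rd d))
    (f1 : Rd d → Vec N → ℝ) (ξ : Vec N) : ℝ :=
  liminf (fun k : ℕ =>
    sInf {c : ℝ | ∃ v : Rd d → Vec N,
      MemLp v (ENNReal.ofReal p) (volume.restrict (Qcube d)) ∧ Zper v ∧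
      (∫ y in Qcube d, v y) = 0 ∧ AFreeTorus A v ∧
      c = ∫ y in Qcube d ∩ {y | (k : ℝ) • y ∈ D1per D0}, f1 ((k : ℝ) • y) (ξ + v y)}) atTop

/-- The high-contrast energy `F_ε`. -/
def Feps {d N M : ℕ} (p : ℝ) (A : Fin d → (Vec N →ₗ[ℝ] Vec M)) (Ω D0 : Set (Rd d))
    (f0 : ℝ → Vec N → ℝ) (f1 : Rd d → Vec N → ℝ) (ε : ℝ) (u : Rd d → Vec N) : EReal :=
  if u ∈ U1 p A Ω then
    (((∫ x in softPart ε Ω D0, f0 ε (ε • u x)) +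
      ∫ x in stiffPart ε Ω D0, f1 (ε⁻¹ • x) (u x) : ℝ) : EReal)
  else ⊤

/-- The soft energy `F_{0,ε}`. -/
def F0eps {d N M : ℕ} (p : ℝ) (A : Fin d → (Vec N →ₗ[ℝ] Vec M)) (Ω D0 : Set (Rd d))
    (f0 : ℝ → Vec N → ℝ) (ε : ℝ) (u : Rd d → Vec N) : EReal :=
  if u ∈ U1 p A Ω then ((∫ x in softPart ε Ω D0, f0 ε (ε • u x) : ℝ) : EReal) else ⊤

/-- The stiff energy `F_{1,ε}`. -/
def F1eps {d N M : ℕ} (p : ℝ) (A : Fin d → (Vec N →ₗ[ℝ] Vec M)) (Ω D0 : Set (Rd d))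
    (f1 : Rd d → Vec N → ℝ) (ε : ℝ) (u : Rd d → Vec N) : EReal :=
  if u ∈ U1 p A Ω then ((∫ x in stiffPart ε Ω D0, f1 (ε⁻¹ • x) (u x) : ℝ) : EReal) else ⊤

/-- The limiting functional `F = α₀ + ∫_Ω f_hom(u)`. -/
def Flim {d N M : ℕ} (p : ℝ) (A : Fin d → (Vec N →ₗ[ℝ] Vec M)) (Ω D0 : Set (Rd d))
    (f0lim : Vec N → ℝ) (f1 : Rd d → Vec N → ℝ) (u : Rd d → Vec N) : EReal :=
  if u ∈ U1 p A Ω then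
    ((alpha0 p A Ω D0 f0lim + ∫ x in Ω, fhom p A D0 f1 (u x) : ℝ) : EReal)
  else ⊤

/-- The limiting soft functional `F₀`. -/
def F0lim {d N M : ℕ} (p : ℝ) (A : Fin d → (Vec N →ₗ[ℝ] Vec M)) (Ω D0 : Set (Rd d))
    (f0lim : Vec N → ℝ) (u : Rd d → Vec N) : EReal :=
  if u =ᵐ[volume.restrict Ω] (0 : Rd d → Vec N) then ((alpha0 p A Ω D0 f0lim : ℝ) : EReal)
  else ⊤

/-- The limiting stiff functional `F₁`. -/
def F1lim {d N M : ℕ} (p : ℝ) (A : Fin d → (Vec N →ₗ[ℝ] Vec M)) (Ω D0 : Set (Rd d))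
    (f1 : Rd d → Vec N → ℝ) (u : Rd d → Vec N) : EReal :=
  if u ∈ U1 p A Ω then ((∫ x in Ω, fhom p A D0 f1 (u x) : ℝ) : EReal) else ⊤

/-! ## Higher-order operators, potentials, Sobolev spaces -/

/-- The pointwise value of the formal adjoint of the `k`-th order homogeneous operator
with coefficients `A`. -/
def adjOp {d k N M : ℕ} (A : (Fin k → Fin d) → (Vec N →ₗ[ℝ] Vec M)) (ψ : Rd d → Vec M)
    (x : Rd d) : Vec N :=
  fun n => (-1 : ℝ) ^ k * ∑ j : Fin k → Fin d,
    dot (A j (Pi.single n 1)) (iteratedFDeriv ℝ k ψ x (fun t => Pi.single (j t) 1))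

/-- `𝒜 u = 0` in `W^{-k,p}(O)` for a `k`-th order operator. -/
def AFreeOnK {d k N M : ℕ} (A : (Fin k → Fin d) → (Vec N →ₗ[ℝ] Vec M)) (O : Set (Rd d))
    (u : Rd d → Vec N) : Prop :=
  ∀ ψ : Rd d → Vec M, TestOn O ψ → ∫ x in O, dot (u x) (adjOp A ψ x) = 0

/-- The symbol of a `k`-th order homogeneous operator. -/
def symbK {d k N M : ℕ} (A : (Fin k → Fin d) → (Vec N →ₗ[ℝ] Vec M)) (ω : Rd d) :
    Vec N →ₗ[ℝ] Vec M :=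
  ∑ j : Fin k → Fin d, (∏ t, ω (j t)) • A j

def ConstantRankK {d k N M : ℕ} (A : (Fin k → Fin d) → (Vec N →ₗ[ℝ] Vec M)) : Prop :=
  ∃ r : ℕ, ∀ ω : Rd d, ω ≠ 0 → Module.finrank ℝ (LinearMap.range (symbK A ω)) = r

/-- `g` is the weak partial derivative `∂_j w` (for the `m`-tuple `j` of directions) on `U`. -/
def IsWeakDerivOn {d m M : ℕ} (U : Set (Rd d)) (j : Fin m → Fin d) (w g : Rd d → Vec M) :
    Prop :=
  ∀ φ : Rd d → ℝ, ContDiff ℝ (⊤ : ℕ∞) φ → HasCompactSupport φ → tsupport φ ⊆ U →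
    ∀ cc : Fin M, (∫ x in U, w x cc * iteratedFDeriv ℝ m φ x (fun t => Pi.single (j t) 1))
      = (-1 : ℝ) ^ m * ∫ x in U, g x cc * φ x

/-- Membership in the Sobolev space `W^{ℓ,p}(U; ℝ^M)`. -/
def MemW {d M : ℕ} (ℓ : ℕ) (p : ℝ) (U : Set (Rd d)) (w : Rd d → Vec M) : Prop :=
  MemLpOn p U w ∧ ∀ m : ℕ, m ≤ ℓ → ∀ j : Fin m → Fin d,
    ∃ g : Rd d → Vec M, MemLpOn p U g ∧ IsWeakDerivOn U j w g

/-- A choice of the weak derivative `∂_j w` on `U` (defaults to `0`). -/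
def wDeriv {d m M : ℕ} (p : ℝ) (U : Set (Rd d)) (j : Fin m → Fin d) (w : Rd d → Vec M) :
    Rd d → Vec M :=
  if h : ∃ g : Rd d → Vec M, MemLpOn p U g ∧ IsWeakDerivOn U j w g then h.choose else 0

/-- The `L^p(U)` norm of the `ℓ`-th order (weak) gradient `∇^ℓ w`. -/
def gradLp {d M : ℕ} (ℓ : ℕ) (p : ℝ) (U : Set (Rd d)) (w : Rd d → Vec M) : ℝ :=
  (eLpNorm (fun x => Real.sqrt (∑ j : Fin ℓ → Fin d, eN (wDeriv p U j w x) ^ 2))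
    (ENNReal.ofReal p) (volume.restrict U)).toReal

/-- The action `ℬ w = ∑_{|j|=ℓ} B^{(j)} ∂_j w` of an `ℓ`-th order operator on a Sobolev
function, through its weak derivatives. -/
def opApplyW {d ℓ M N : ℕ} (p : ℝ) (U : Set (Rd d))
    (B : (Fin ℓ → Fin d) → (Vec M →ₗ[ℝ] Vec N)) (w : Rd d → Vec M) : Rd d → Vec N :=
  fun x => ∑ j : Fin ℓ → Fin d, B j (wDeriv p U j w x)

/-- `U` is an `𝒜`-extension domain (for a `k`-th order operator `𝒜`). -/
def AExtensionDomainK {d k N M : ℕ} (p : ℝ) (A : (Fin k → Fin d) → (Vec N →ₗ[ℝ] Vec M))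
    (U : Set (Rd d)) : Prop :=
  ∃ (E : (Rd d → Vec N) → (Rd d → Vec N)) (c : ℝ), 0 < c ∧
    ∀ u : Rd d → Vec N, MemLpOn p U u → AFreeOnK A U u →
      (∀ᵐ x ∂volume.restrict U, E u x = u x) ∧
      MemLp (E u) (ENNReal.ofReal p) volume ∧
      LpNormOn p Set.univ (E u) ≤ c * LpNormOn p U u ∧
      AFreeOnK A Set.univ (E u)

/-- `U` is an `𝒜`-extension domain (first-order version). -/
def AExtensionDomain1 {d N M : ℕ} (p : ℝ) (A : Fin d → (Vec N →ₗ[ℝ] Vec M))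
    (U : Set (Rd d)) : Prop :=
  ∃ (E : (Rd d → Vec N) → (Rd d → Vec N)) (c : ℝ), 0 < c ∧
    ∀ u : Rd d → Vec N, MemLpOn p U u → AFreeOn A U u →
      (∀ᵐ x ∂volume.restrict U, E u x = u x) ∧
      MemLp (E u) (ENNReal.ofReal p) volume ∧
      LpNormOn p Set.univ (E u) ≤ c * LpNormOn p U u ∧
      AFreeOn A Set.univ (E u)

/-- The `W^{m,q}(ℝ^d)` norm of a smooth function. -/
def WmNorm {d M : ℕ} (m : ℕ) (q : ℝ) (ψ : Rd d → Vec M) : ℝ :=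
  ∑ j ∈ Finset.range (m + 1),
    (eLpNorm (fun x => ‖iteratedFDeriv ℝ j ψ x‖) (ENNReal.ofReal q) volume).toReal

/-- The `W^{-m,p}(ℝ^d)` norm of `𝒜 u`, via duality with `W^{m,p'}`. -/
def negNorm {d k N M : ℕ} (m : ℕ) (p : ℝ) (A : (Fin k → Fin d) → (Vec N →ₗ[ℝ] Vec M))
    (u : Rd d → Vec N) : ℝ :=
  sSup {c : ℝ | ∃ ψ : Rd d → Vec M, ContDiff ℝ (⊤ : ℕ∞) ψ ∧ HasCompactSupport ψ ∧
    WmNorm m (conjExp p) ψ ≤ 1 ∧ c = ∫ x, dot (u x) (adjOp A ψ x)}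

/-! ## Fourier-analytic material -/

/-- Fourier transform of a (complexified, vector-valued) function. -/
def ftC {d N : ℕ} (f : Rd d → (Fin N → ℂ)) (ω : Rd d) : Fin N → ℂ :=
  ∫ x : Rd d, Complex.exp (-(2 * Real.pi * Complex.I) * (∑ i, (x i : ℂ) * (ω i : ℂ))) • f x

/-- Complexification of a real vector-valued map. -/
def cplx {d N : ℕ} (u : Rd d → Vec N) : Rd d → (Fin N → ℂ) := fun x n => ((u x n : ℝ) : ℂ)

/-- Action on `ℂ^N` of (the complexification of) a real linear map on `ℝ^N`. -/
def matC {N : ℕ} (P : Vec N →ₗ[ℝ] Vec N) (v : Fin N → ℂ) : Fin N → ℂ :=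
  fun m => ∑ n, ((P (Pi.single n 1) m : ℝ) : ℂ) * v n

end HC

namespace HC

section Helpers

lemma eN_eq {N : ℕ} (ξ : Vec N) : eN ξ = ‖(WithLp.toLp 2 ξ : EuclideanSpace ℝ (Fin N))‖ := by
  simp [eN, EuclideanSpace.norm_eq]

lemma eN_nonneg {N : ℕ} (ξ : Vec N) : 0 ≤ eN ξ := Real.sqrt_nonneg _

lemma eN_smul {N : ℕ} (c : ℝ) (ξ : Vec N) : eN (c • ξ) = |c| * eN ξ := by
  rw [eN_eq, eN_eq, WithLp.toLp_smul, norm_smul, Real.norm_eq_abs]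

lemma eN_sub_le {N : ℕ} (ξ ζ : Vec N) : eN (ξ - ζ) ≤ eN ξ + eN ζ := by
  rw [eN_eq, eN_eq, eN_eq, WithLp.toLp_sub]
  exact norm_sub_le _ _

lemma continuous_eN {N : ℕ} : Continuous (eN : Vec N → ℝ) := by
  unfold eN
  fun_prop

lemma norm_le_eN {N : ℕ} (ξ : Vec N) : ‖ξ‖ ≤ eN ξ := by
  rw [pi_norm_le_iff_of_nonneg (eN_nonneg ξ)]
  intro i
  rw [eN_eq]
  exact PiLp.norm_apply_le (WithLp.toLp 2 ξ : EuclideanSpace ℝ (Fin N)) i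

lemma dot_self {N : ℕ} (ξ : Vec N) : dot ξ ξ = eN ξ ^ 2 := by
  unfold dot eN
  rw [Real.sq_sqrt (Finset.sum_nonneg fun i _ => sq_nonneg _)]
  simp [sq]

/-- The dot product as a continuous bilinear map. -/
def dotL (N : ℕ) : Vec N →L[ℝ] Vec N →L[ℝ] ℝ :=
  ∑ j, (ContinuousLinearMap.mul ℝ ℝ).bilinearComp
    (ContinuousLinearMap.proj j) (ContinuousLinearMap.proj j)

lemma dotL_apply {N : ℕ} (u v : Vec N) : dotL N u v = dot u v := by
  simp [dotL, dot]

lemma dot_smul_right {N : ℕ} (c : ℝ) (u v : Vec N) : dot u (c • v) = c * dot u v := by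
  rw [← dotL_apply, ← dotL_apply]; simp

lemma dot_smul_left {N : ℕ} (c : ℝ) (u v : Vec N) : dot (c • u) v = c * dot u v := by
  rw [← dotL_apply, ← dotL_apply]; simp

lemma dot_sub_left {N : ℕ} (u w v : Vec N) : dot (u - w) v = dot u v - dot w v := by
  rw [← dotL_apply, ← dotL_apply, ← dotL_apply]; simp

lemma conj_holder {p : ℝ} (hp : 1 < p) : p.HolderConjugate (conjExp p) :=
  Real.HolderConjugate.conjExponent hp

lemma integrable_dot {α : Type*} [MeasurableSpace α] {μ : Measure α} {N : ℕ} {p : ℝ} (hp : 1 < p)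
    {u g : α → Vec N} (hu : MemLp u (ENNReal.ofReal p) μ)
    (hg : MemLp g (ENNReal.ofReal (conjExp p)) μ) : Integrable (fun x => dot (u x) (g x)) μ := by
  have := (conj_holder hp).ennrealOfReal
  have h := (dotL N).memLp_of_bilin (r := 1) hu hg
  rw [memLp_one_iff_integrable] at h
  simpa only [dotL_apply] using h

lemma integrable_eN {α : Type*} [MeasurableSpace α] {μ : Measure α} {N : ℕ} {p : ℝ} (hp : 1 < p)
    {u : α → Vec N} (hu : MemLp u (ENNReal.ofReal p) μ) :
    Integrable (fun x => eN (u x) ^ p) μ := by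
  have h : MemLp (fun x => (EuclideanSpace.equiv (Fin N) ℝ).symm (u x)) (ENNReal.ofReal p) μ :=
    ContinuousLinearMap.comp_memLp'
      ((EuclideanSpace.equiv (Fin N) ℝ).symm : Vec N →L[ℝ] EuclideanSpace ℝ (Fin N)) hu
  have h2 := h.integrable_norm_rpow (by simp; linarith) (by simp)
  rw [ENNReal.toReal_ofReal (by linarith)] at h2
  simp only [eN_eq]
  exact h2

/-- The dual function of `w`. -/
def dualFn {α : Type*} {N : ℕ} (p : ℝ) (w : α → Vec N) : α → Vec N :=
  fun x => (eN (w x) ^ (p - 2)) • w x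

lemma dot_dualFn {α : Type*} {N : ℕ} {p : ℝ} (hp : 1 < p) (w : α → Vec N) (x : α) :
    dot (w x) (dualFn p w x) = eN (w x) ^ p := by
  unfold dualFn
  rw [dot_smul_right, dot_self]
  rcases (eN_nonneg (w x)).eq_or_lt with h | h
  · rw [← h, Real.zero_rpow (by linarith : p ≠ 0)]; simp
  · rw [← Real.rpow_natCast, ← Real.rpow_add h]; norm_num

lemma norm_dualFn {α : Type*} {N : ℕ} {p : ℝ} (hp : 1 < p) (w : α → Vec N) (x : α) :
    ‖dualFn p w x‖ ^ (conjExp p) ≤ eN (w x) ^ p := by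
  have hq := conj_holder hp
  have h0 := eN_nonneg (w x)
  have h1 : ‖dualFn p w x‖ ≤ eN (w x) ^ (p - 1) := by
    refine (norm_le_eN _).trans ?_
    unfold dualFn
    rw [eN_smul, abs_of_nonneg (Real.rpow_nonneg h0 _)]
    rcases h0.eq_or_lt with h | h
    · rw [← h, Real.zero_rpow (by linarith : p - 1 ≠ 0)]; simp
    · rw [← Real.rpow_add_one h.ne']; apply le_of_eq; congr 1; ring
  calc ‖dualFn p w x‖ ^ (conjExp p) ≤ (eN (w x) ^ (p - 1)) ^ (conjExp p) :=
        Real.rpow_le_rpow (norm_nonneg _) h1 hq.symm.nonneg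
    _ = eN (w x) ^ p := by
        rw [← Real.rpow_mul h0, hq.sub_one_mul_conj]

lemma memLp_dualFn {α : Type*} [MeasurableSpace α] {μ : Measure α} {N : ℕ} {p : ℝ} (hp : 1 < p)
    {w : α → Vec N} (hw : MemLp w (ENNReal.ofReal p) μ) :
    MemLp (dualFn p w) (ENNReal.ofReal (conjExp p)) μ ∧
      (eLpNorm (dualFn p w) (ENNReal.ofReal (conjExp p)) μ).toReal ≤
        (∫ x, eN (w x) ^ p ∂μ) ^ (conjExp p)⁻¹ := by
  have hq := conj_holder hp
  have hq0 := hq.symm.pos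
  have hm : AEStronglyMeasurable (dualFn p w) μ := by
    have h1 : AEMeasurable (fun x => eN (w x)) μ :=
      continuous_eN.measurable.comp_aemeasurable hw.1.aemeasurable
    exact (h1.pow_const (p - 2)).aestronglyMeasurable.smul hw.1
  have hi := integrable_eN hp hw
  have hle : ∀ x, ‖dualFn p w x‖ ^ (conjExp p) ≤ eN (w x) ^ p := norm_dualFn hp w
  have hi2 : Integrable (fun x => ‖dualFn p w x‖ ^ (conjExp p)) μ := by
    refine hi.mono' ((hm.norm.aemeasurable.pow_const _).aestronglyMeasurable) ?_
    refine Eventually.of_forall fun x => ?_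
    rw [Real.norm_of_nonneg (by positivity)]
    exact hle x
  have hM : MemLp (dualFn p w) (ENNReal.ofReal (conjExp p)) μ := by
    rw [← integrable_norm_rpow_iff hm (by simpa using hq0) (by simp),
      ENNReal.toReal_ofReal hq0.le]
    exact hi2
  refine ⟨hM, ?_⟩
  rw [hM.eLpNorm_eq_integral_rpow_norm (by simpa using hq0) (by simp),
    ENNReal.toReal_ofReal hq0.le, ENNReal.toReal_ofReal (by positivity)]
  refine Real.rpow_le_rpow (by positivity) (integral_mono hi2 hi hle) (by positivity)

/-- Uniform boundedness for weakly bounded sequences in `L^p`. -/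
lemma bounded_of_weak {α : Type*} [MeasurableSpace α] {μ : Measure α} {N : ℕ} {p : ℝ} (hp : 1 < p)
    {ι : Type*} {w : ι → α → Vec N} (hw : ∀ n, MemLp (w n) (ENNReal.ofReal p) μ)
    (h : ∀ g : α → Vec N, MemLp g (ENNReal.ofReal (conjExp p)) μ →
      ∃ C, ∀ n, |∫ x, dot (w n x) (g x) ∂μ| ≤ C) :
    ∃ C, ∀ n, ∫ x, eN (w n x) ^ p ∂μ ≤ C := by
  have hq := conj_holder hp
  have := hq.ennrealOfReal
  have : Fact (1 ≤ ENNReal.ofReal p) := ⟨by simpa using hp.le⟩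
  have : Fact (1 ≤ ENNReal.ofReal (conjExp p)) := ⟨by simpa using hq.symm.lt.le⟩
  let T : ι → Lp (Vec N) (ENNReal.ofReal (conjExp p)) μ →L[ℝ] ℝ := fun n =>
    (dotL N).lpPairing μ (ENNReal.ofReal p) (ENNReal.ofReal (conjExp p)) ((hw n).toLp (w n))
  have hT : ∀ n (g : Lp (Vec N) (ENNReal.ofReal (conjExp p)) μ),
      T n g = ∫ x, dot (w n x) (g x) ∂μ := by
    intro n g
    simp only [T, ContinuousLinearMap.lpPairing_eq_integral, dotL_apply]
    refine integral_congr_ae ?_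
    filter_upwards [(hw n).coeFn_toLp] with x hx
    rw [hx]
  obtain ⟨C, hC⟩ := banach_steinhaus (g := T) (by
    intro g
    obtain ⟨C, hC⟩ := h g (Lp.memLp g)
    exact ⟨C, fun n => by rw [hT]; exact hC n⟩)
  refine ⟨max C 0 ^ p, fun n => ?_⟩
  obtain ⟨hM, hle⟩ := memLp_dualFn hp (hw n)
  set X := ∫ x, eN (w n x) ^ p ∂μ with hX
  have hX0 : 0 ≤ X := integral_nonneg fun x => Real.rpow_nonneg (eN_nonneg _) _
  have e1 : T n (hM.toLp _) = X := by
    rw [hT, hX]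
    refine integral_congr_ae ?_
    filter_upwards [hM.coeFn_toLp] with x hx
    rw [hx, dot_dualFn hp]
  have e2 : X ≤ max C 0 * X ^ (conjExp p)⁻¹ := by
    calc X = T n (hM.toLp _) := e1.symm
      _ ≤ ‖T n (hM.toLp _)‖ := le_abs_self _
      _ ≤ ‖T n‖ * ‖hM.toLp _‖ := (T n).le_opNorm _
      _ ≤ max C 0 * X ^ (conjExp p)⁻¹ := by
        rw [Lp.norm_toLp]
        exact mul_le_mul ((hC n).trans (le_max_left _ _)) hle (by positivity) (le_max_right _ _)
  rcases hX0.eq_or_lt with h0 | h0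
  · rw [← h0]; positivity
  · have e3 : X ^ (p⁻¹) ≤ max C 0 := by
      have e4 : X ^ (p⁻¹) * X ^ (conjExp p)⁻¹ = X := by
        rw [← Real.rpow_add h0, hq.inv_add_inv_eq_one, Real.rpow_one]
      have hpos : 0 < X ^ (conjExp p)⁻¹ := by positivity
      exact le_of_mul_le_mul_right (e4.trans_le e2) hpos
    calc X = (X ^ (p⁻¹)) ^ p := by
          rw [← Real.rpow_mul hX0, inv_mul_cancel₀ (by linarith), Real.rpow_one]
      _ ≤ max C 0 ^ p := Real.rpow_le_rpow (by positivity) e3 (by linarith)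

/-- The elementary pointwise estimate. -/
lemma pointwise_est {p e α β : ℝ} (hp : 1 < p) (he : 0 < e) (he1 : e ≤ 1) (hα : 0 ≤ α)
    (hβ : 0 ≤ β) (γ : ℝ) (hγ : 0 ≤ γ) (hγ' : γ ≤ α + e * β) :
    (1 + α ^ (p - 1) + γ ^ (p - 1)) * (e * β) ≤
      e * (3 * (3 ^ p + 1)) * (1 + α ^ p + β ^ p) := by
  set K := 1 + α + e * β with hK
  have heβ : 0 ≤ e * β := by positivity
  have hK1 : 1 ≤ K := by linarith
  have hK0 : 0 < K := by linarith
  have a1 : (1:ℝ) ≤ K ^ (p - 1) := Real.one_le_rpow hK1 (by linarith)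
  have a2 : α ^ (p - 1) ≤ K ^ (p - 1) := Real.rpow_le_rpow hα (by linarith) (by linarith)
  have a3 : γ ^ (p - 1) ≤ K ^ (p - 1) := Real.rpow_le_rpow hγ (by linarith) (by linarith)
  have hKp : K ^ p = K ^ (p - 1) * K := by
    rw [← Real.rpow_add_one hK0.ne']; congr 1; ring
  have b1 : K ^ (p - 1) * (e * β) ≤ e * (K ^ p + β ^ p) := by
    have hβp : 0 ≤ β ^ p := by positivity
    rcases le_total β K with h | h
    · have : K ^ (p - 1) * β ≤ K ^ (p - 1) * K := by gcongr
      nlinarith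
    · have hβ0 : 0 < β := by linarith
      have h2 : K ^ (p - 1) * β ≤ β ^ (p - 1) * β := by
        gcongr
      have h3 : β ^ (p - 1) * β = β ^ p := by
        rw [← Real.rpow_add_one hβ0.ne']; congr 1; ring
      have : 0 ≤ K ^ p := by positivity
      nlinarith
  have b2 : K ^ p ≤ 3 ^ p * (1 + α ^ p + β ^ p) := by
    have hm : K ≤ 3 * max 1 (max α β) := by
      have := le_max_left 1 (max α β)
      have := (le_max_left α β).trans (le_max_right 1 (max α β))
      have := (le_max_right α β).trans (le_max_right 1 (max α β))
      nlinarith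
    have hm0 : 0 ≤ max 1 (max α β) := zero_le_one.trans (le_max_left _ _)
    have hm2 : (max 1 (max α β)) ^ p ≤ 1 + α ^ p + β ^ p := by
      have : 0 ≤ α ^ p := by positivity
      have : 0 ≤ β ^ p := by positivity
      rcases max_cases 1 (max α β) with ⟨h, _⟩ | ⟨h, _⟩
      · rw [h, Real.one_rpow]; linarith
      · rw [h]
        rcases max_cases α β with ⟨h, _⟩ | ⟨h, _⟩ <;> rw [h] <;> linarith
    calc K ^ p ≤ (3 * max 1 (max α β)) ^ p := Real.rpow_le_rpow hK0.le hm (by linarith)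
      _ = 3 ^ p * (max 1 (max α β)) ^ p := Real.mul_rpow (by norm_num) hm0
      _ ≤ _ := by gcongr
  have hαp : 0 ≤ α ^ p := by positivity
  calc (1 + α ^ (p - 1) + γ ^ (p - 1)) * (e * β) ≤ (3 * K ^ (p - 1)) * (e * β) := by
        gcongr; linarith
    _ = 3 * (K ^ (p - 1) * (e * β)) := by ring
    _ ≤ 3 * (e * (K ^ p + β ^ p)) := by gcongr
    _ ≤ 3 * (e * (3 ^ p * (1 + α ^ p + β ^ p) + (1 + α ^ p + β ^ p))) := by
        gcongr; linarith
    _ = _ := by ring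

lemma isOpen_softPart {d : ℕ} {ε : ℝ} (hε : 0 < ε) (Ω D0 : Set (Rd d)) (hD : IsOpen D0) :
    IsOpen (softPart ε Ω D0) := by
  refine isOpen_biUnion fun z _ => ?_
  have : cell ε z D0 = (fun x : Rd d => fun i => ε⁻¹ * x i - (z i : ℝ)) ⁻¹' D0 := by
    ext x
    simp only [cell, Set.mem_image, Set.mem_preimage]
    constructor
    · rintro ⟨y, hy, rfl⟩
      convert hy using 2 with i
      field_simp; ring
    · intro h
      refine ⟨_, h, ?_⟩
      ext i
      field_simp; ring
  rw [this]
  exact hD.preimage (by fun_prop)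

lemma softPart_subset {d : ℕ} (ε : ℝ) (Ω D0 : Set (Rd d)) : softPart ε Ω D0 ⊆ Ω :=
  Set.iUnion₂_subset fun _ h => h

lemma memLp_adjApply {d N M : ℕ} (A : Fin d → (Vec N →ₗ[ℝ] Vec M)) (O : Set (Rd d))
    {ψ : Rd d → Vec M} (hψ : TestOn O ψ) (q : ℝ≥0∞) :
    MemLp (adjApply A ψ) q (volume.restrict O) := by
  obtain ⟨h1, h2, -⟩ := hψ
  have hc : Continuous (fderiv ℝ ψ) := h1.continuous_fderiv (by simp)
  have hcont : Continuous (adjApply A ψ) := by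
    unfold adjApply dot
    fun_prop
  have hs : HasCompactSupport (adjApply A ψ) := by
    refine (h2.fderiv ℝ).mono fun x hx => ?_
    contrapose! hx
    simp only [Function.mem_support, not_not] at hx ⊢
    ext n
    simp [adjApply, hx, dot]
  exact (hcont.memLp_of_hasCompactSupport hs).restrict O

/-- Eventual boundedness in `L^p` of a weakly convergent family. -/
lemma eventually_bounded {d N : ℕ} {p : ℝ} (hp : 1 < p) {O : Set (Rd d)}
    {w : ℝ → Rd d → Vec N} {v : Rd d → Vec N} (hw : ∀ ε : ℝ, 0 < ε → MemLpOn p O (w ε))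
    (h : WeakLpTendsto p O (𝓝[>] (0 : ℝ)) w v) :
    ∃ C, ∀ᶠ ε in 𝓝[>] (0 : ℝ), ∫ x in O, eN (w ε x) ^ p ≤ C := by
  by_contra! hcon
  have hex : ∀ n : ℕ, ∃ ε : ℝ, (0 < ε ∧ ε < 1 / ((n : ℝ) + 1)) ∧
      (n : ℝ) < ∫ x in O, eN (w ε x) ^ p := by
    intro n
    have h1 : ∀ᶠ ε in 𝓝[>] (0 : ℝ), 0 < ε ∧ ε < 1 / ((n : ℝ) + 1) :=
      Ioo_mem_nhdsGT (by positivity)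
    have h2 := hcon n
    obtain ⟨ε, hh1, hh2⟩ := (h2.and_eventually h1).exists
    exact ⟨ε, hh2, hh1⟩
  choose e he1 he2 using hex
  have het : Tendsto e atTop (𝓝[>] (0 : ℝ)) := by
    rw [tendsto_nhdsWithin_iff]
    refine ⟨?_, Eventually.of_forall fun n => (he1 n).1⟩
    exact squeeze_zero (fun n => (he1 n).1.le) (fun n => (he1 n).2.le)
      tendsto_one_div_add_atTop_nhds_zero_nat
  obtain ⟨C, hC⟩ := bounded_of_weak hp (w := fun n => w (e n)) (fun n => hw _ (he1 n).1) (by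
    intro g hg
    obtain ⟨C, hC⟩ := ((h g hg).comp het).abs.bddAbove_range
    exact ⟨C, fun n => hC ⟨n, rfl⟩⟩)
  obtain ⟨n, hn⟩ := exists_nat_gt C
  exact absurd (hC n) (not_le.mpr (hn.trans (he2 n)))

lemma soft_integrable {d N : ℕ} {p a lam Lam : ℝ} (hp : 1 < p) {f : Vec N → ℝ}
    (hf : Continuous f) (hlam : 0 < lam) (ha : 0 < a)
    (hg : ∀ ξ, lam * (-a + eN ξ ^ p) ≤ f ξ ∧ f ξ ≤ Lam * (1 + eN ξ ^ p))
    {μ : Measure (Rd d)} [IsFiniteMeasure μ] {u : Rd d → Vec N}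
    (hu : MemLp u (ENNReal.ofReal p) μ) : Integrable (fun x => f (u x)) μ := by
  have hi := integrable_eN hp hu
  have hb : Integrable (fun x => lam * a + |Lam| * (1 + eN (u x) ^ p)) μ :=
    (integrable_const _).add (((integrable_const _).add hi).const_mul _)
  refine hb.mono' (hf.comp_aestronglyMeasurable hu.1) (Eventually.of_forall fun x => ?_)
  obtain ⟨h1, h2⟩ := hg (u x)
  have h0 : 0 ≤ eN (u x) ^ p := Real.rpow_nonneg (eN_nonneg _) _
  have h3 := le_abs_self Lam
  have h4 := abs_nonneg Lam
  have h5 : 0 < lam * a := by positivity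
  rw [Real.norm_eq_abs, abs_le]
  constructor
  · have : 0 ≤ lam * eN (u x) ^ p := by positivity
    have : 0 ≤ |Lam| * (1 + eN (u x) ^ p) := by positivity
    linarith
  · have : Lam * (1 + eN (u x) ^ p) ≤ |Lam| * (1 + eN (u x) ^ p) := by gcongr
    linarith

lemma soft_diff {d N : ℕ} {p a lam Lam mu ε : ℝ} (hp : 1 < p) (hε : 0 < ε) (hε1 : ε ≤ 1)
    {f : Vec N → ℝ} (hf : Continuous f) (hlam : 0 < lam) (ha : 0 < a)
    (hg : ∀ ξ, lam * (-a + eN ξ ^ p) ≤ f ξ ∧ f ξ ≤ Lam * (1 + eN ξ ^ p))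
    (hmu : 0 < mu) (hL : ∀ ξ ζ : Vec N,
      |f ξ - f ζ| ≤ mu * (1 + eN ξ ^ (p - 1) + eN ζ ^ (p - 1)) * eN (ξ - ζ))
    {μ : Measure (Rd d)} [IsFiniteMeasure μ] {u w : Rd d → Vec N}
    (hu : MemLp u (ENNReal.ofReal p) μ) (hw : MemLp w (ENNReal.ofReal p) μ) :
    |(∫ x, f (ε • u x) ∂μ) - ∫ x, f (ε • (u x - w x)) ∂μ| ≤
      ε * (mu * (3 * (3 ^ p + 1)) *
        ((μ univ).toReal + (∫ x, eN (ε • u x) ^ p ∂μ) + ∫ x, eN (w x) ^ p ∂μ)) := by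
  have i1 := soft_integrable (Lam := Lam) hp hf hlam ha hg (hu.const_smul ε)
  have i2 := soft_integrable (Lam := Lam) hp hf hlam ha hg ((hu.sub hw).const_smul ε)
  simp only [Pi.smul_apply, Pi.sub_apply] at i1 i2
  have j1 := integrable_eN hp (hu.const_smul ε)
  have j2 := integrable_eN hp hw
  simp only [Pi.smul_apply] at j1
  have j3 : Integrable (fun x => 1 + eN (ε • u x) ^ p) μ := (integrable_const _).add j1
  rw [← integral_sub i1 i2]
  have hR : ε * (mu * (3 * (3 ^ p + 1)) *
        ((μ univ).toReal + (∫ x, eN (ε • u x) ^ p ∂μ) + ∫ x, eN (w x) ^ p ∂μ)) =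
      ∫ x, ε * (mu * (3 * (3 ^ p + 1))) * (1 + eN (ε • u x) ^ p + eN (w x) ^ p) ∂μ := by
    rw [integral_const_mul, integral_add j3 j2, integral_add (integrable_const _) j1]
    simp [Measure.real]
    ring
  rw [hR, ← Real.norm_eq_abs]
  refine norm_integral_le_of_norm_le ((j3.add j2).const_mul _) (Eventually.of_forall fun x => ?_)
  rw [Real.norm_eq_abs]
  refine (hL _ _).trans ?_
  have e1 : ε • u x - ε • (u x - w x) = ε • w x := by rw [smul_sub]; abel
  have e2 : eN (ε • (u x - w x)) ≤ eN (ε • u x) + ε * eN (w x) := by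
    rw [smul_sub]
    refine (eN_sub_le _ _).trans ?_
    rw [eN_smul ε (w x), abs_of_pos hε]
  rw [e1, eN_smul ε (w x), abs_of_pos hε]
  have := pointwise_est hp hε hε1 (eN_nonneg (ε • u x)) (eN_nonneg (w x)) _ (eN_nonneg _) e2
  calc _ = mu * ((1 + eN (ε • u x) ^ (p - 1) + eN (ε • (u x - w x)) ^ (p - 1)) *
        (ε * eN (w x))) := by ring
    _ ≤ mu * (ε * (3 * (3 ^ p + 1)) * (1 + eN (ε • u x) ^ p + eN (w x) ^ p)) := by gcongr
    _ = _ := by ring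

/-- A lower bound for integrals, valid also for non-integrable integrands. -/
lemma integral_lower {α : Type*} [MeasurableSpace α] {μ : Measure α} [IsFiniteMeasure μ]
    {g : α → ℝ} {b V : ℝ} (hb : 0 ≤ b) (hV : (μ univ).toReal ≤ V) (hg : ∀ x, -b ≤ g x) :
    -(b * V) ≤ ∫ x, g x ∂μ := by
  have hV0 : 0 ≤ V := ENNReal.toReal_nonneg.trans hV
  by_cases hi : Integrable g μ
  · have := integral_mono (integrable_const (-b)) hi hg
    simp only [integral_const, smul_eq_mul, Measure.real] at this
    nlinarith
  · rw [integral_undef hi]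
    nlinarith [mul_nonneg hb hV0]

/-- Abstract liminf/limsup splitting. -/
lemma split_limits {l : Filter ℝ} [l.NeBot] {S S' T : ℝ → ℝ} {B : ℝ}
    (hS : ∀ᶠ e in l, |S' e| ≤ B) (hT : ∀ᶠ e in l, |T e| ≤ B)
    (hr : Tendsto (fun e => S e - S' e) l (𝓝 0)) :
    (liminf (fun e => (S' e : EReal)) l + liminf (fun e => (T e : EReal)) l ≤
      liminf (fun e => ((S e + T e : ℝ) : EReal)) l) ∧
    (limsup (fun e => ((S e + T e : ℝ) : EReal)) l ≤
      limsup (fun e => (S' e : EReal)) l + limsup (fun e => (T e : EReal)) l) := by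
  have bd : ∀ X : ℝ → ℝ, (∀ᶠ e in l, |X e| ≤ B) → limsup (fun e => (X e : EReal)) l ≠ ⊥ ∧
      limsup (fun e => (X e : EReal)) l ≠ ⊤ := by
    intro X hX
    constructor
    · have : ((-B : ℝ) : EReal) ≤ limsup (fun e => (X e : EReal)) l := by
        refine le_limsup_of_frequently_le (Eventually.frequently ?_)
        filter_upwards [hX] with e he
        exact EReal.coe_le_coe_iff.2 (abs_le.1 he).1
      exact ((EReal.bot_lt_coe _).trans_le this).ne'
    · have : limsup (fun e => (X e : EReal)) l ≤ (B : EReal) := by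
        refine limsup_le_of_le (h := ?_)
        filter_upwards [hX] with e he
        exact EReal.coe_le_coe_iff.2 (abs_le.1 he).2
      exact (this.trans_lt (EReal.coe_lt_top _)).ne
  have hr' : Tendsto (fun e => ((S e - S' e : ℝ) : EReal)) l (𝓝 ((0 : ℝ) : EReal)) :=
    (continuous_coe_real_ereal.tendsto 0).comp hr
  have eq : (fun e => ((S e + T e : ℝ) : EReal)) =
      ((fun e => (S' e : EReal)) + fun e => (T e : EReal)) +
        fun e => ((S e - S' e : ℝ) : EReal) := by
    funext e
    simp only [Pi.add_apply, ← EReal.coe_add]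
    congr 1; ring
  rw [eq]
  constructor
  · calc _ ≤ liminf ((fun e => (S' e : EReal)) + fun e => (T e : EReal)) l :=
          EReal.le_liminf_add
      _ = liminf ((fun e => (S' e : EReal)) + fun e => (T e : EReal)) l +
          liminf (fun e => ((S e - S' e : ℝ) : EReal)) l := by
          rw [hr'.liminf_eq]; simp
      _ ≤ _ := EReal.le_liminf_add
  · calc _ ≤ limsup ((fun e => (S' e : EReal)) + fun e => (T e : EReal)) l +
          limsup (fun e => ((S e - S' e : ℝ) : EReal)) l := by
          apply EReal.limsup_add_le <;> right <;> rw [hr'.limsup_eq] <;> simp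
      _ = limsup ((fun e => (S' e : EReal)) + fun e => (T e : EReal)) l := by
          rw [hr'.limsup_eq]; simp
      _ ≤ _ := EReal.limsup_add_le (.inl (bd _ hS).1) (.inl (bd _ hS).2)

end Helpers


/-- splitting lemma.
If `u` is the high-contrast limit of `{u_ε}` (with witnesses `{ũ_ε}`) and the energies
are equibounded, then with `v_ε = u_ε − ũ_ε` the soft/stiff splitting estimates hold. -/
theorem splitting_lemma
    {d N M : ℕ} (p a lam Lam mu : ℝ) (hp : 1 < p)
    (Ω D0 : Set (Rd d)) (hset : GoodSetting d Ω D0)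
    (A : Fin d → (Vec N →ₗ[ℝ] Vec M)) (hcr : ConstantRank A)
    (f0 : ℝ → Vec N → ℝ) (f1 : Rd d → Vec N → ℝ) (f0lim : Vec N → ℝ)
    (h1 : H1soft f0 ∧ H1stiff f1) (h2 : H2 f1)
    (h3 : H3soft p a lam Lam f0 ∧ H3stiff p a lam Lam f1)
    (h4 : H4soft p mu f0 ∧ H4stiff p mu f1) (h5 : H5 f0 f0lim)
    (u ut : ℝ → Rd d → Vec N) (v : Rd d → Vec N)
    -- `u_ε → v` in the high-contrast sense, with witnesses `ũ_ε`:
    (hu0 : WeakLpTendsto p Ω (𝓝[>] (0 : ℝ)) (fun ε x => ε • u ε x) 0)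
    (hut : ∀ ε : ℝ, 0 < ε → MemLpOn p Ω (ut ε) ∧ AFreeOn A Ω (ut ε))
    (heq : ∀ ε : ℝ, 0 < ε → ∀ᵐ x ∂volume.restrict (stiffPart ε Ω D0), u ε x = ut ε x)
    (hutw : WeakLpTendsto p Ω (𝓝[>] (0 : ℝ)) ut v)
    (c : ℝ) (hc : -(a * lam) * (volume Ω).toReal ≤ c)
    (hbd : ∀ ε : ℝ, 0 < ε → Feps p A Ω D0 f0 f1 ε (u ε) ≤ (c : EReal)) :
    AFreeOn A Ω v ∧
    (∀ ε : ℝ, 0 < ε →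
      ∀ᵐ x ∂volume.restrict (stiffPart ε Ω D0), u ε x - ut ε x = 0) ∧
    (∀ ε : ℝ, 0 < ε → AFreeOn A Ω (fun x => u ε x - ut ε x)) ∧
    WeakLpTendsto p Ω (𝓝[>] (0 : ℝ)) (fun ε x => ε • (u ε x - ut ε x)) 0 ∧
    (Filter.liminf (fun ε => F0eps p A Ω D0 f0 ε (fun x => u ε x - ut ε x)) (𝓝[>] (0 : ℝ)) +
        Filter.liminf (fun ε => F1eps p A Ω D0 f1 ε (ut ε)) (𝓝[>] (0 : ℝ)) ≤
      Filter.liminf (fun ε => Feps p A Ω D0 f0 f1 ε (u ε)) (𝓝[>] (0 : ℝ))) ∧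
    (Filter.limsup (fun ε => Feps p A Ω D0 f0 f1 ε (u ε)) (𝓝[>] (0 : ℝ)) ≤
      Filter.limsup (fun ε => F0eps p A Ω D0 f0 ε (fun x => u ε x - ut ε x)) (𝓝[>] (0 : ℝ)) +
        Filter.limsup (fun ε => F1eps p A Ω D0 f1 ε (ut ε)) (𝓝[>] (0 : ℝ))) := by
  obtain ⟨-, hΩo, -, hΩb, -, hD0o, -, -, -, -⟩ := hset
  obtain ⟨⟨ha, hlam, hLam, h3s⟩, ⟨-, -, -, h3t⟩⟩ := h3
  obtain ⟨⟨hmu, h4s⟩, -⟩ := h4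
  have huU : ∀ ε : ℝ, 0 < ε → u ε ∈ U1 p A Ω := by
    intro ε hε
    by_contra hn
    have := hbd ε hε
    rw [Feps, if_neg hn] at this
    exact absurd this (not_le.mpr (EReal.coe_lt_top c))
  have hfin : IsFiniteMeasure (volume.restrict Ω) :=
    ⟨by rw [Measure.restrict_apply_univ]; exact hΩb.measure_lt_top⟩
  have hsub : ∀ ε : ℝ, volume.restrict (softPart ε Ω D0) ≤ volume.restrict Ω := fun ε =>
    Measure.restrict_mono (softPart_subset ε Ω D0) le_rfl
  have hsub1 : ∀ ε : ℝ, volume.restrict (stiffPart ε Ω D0) ≤ volume.restrict Ω := fun ε =>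
    Measure.restrict_mono Set.sdiff_subset le_rfl
  have hfs : ∀ ε : ℝ, IsFiniteMeasure (volume.restrict (softPart ε Ω D0)) := fun ε =>
    isFiniteMeasure_of_le _ (hsub ε)
  have hft : ∀ ε : ℝ, IsFiniteMeasure (volume.restrict (stiffPart ε Ω D0)) := fun ε =>
    isFiniteMeasure_of_le _ (hsub1 ε)
  set V := (volume.restrict Ω univ).toReal with hV
  have hV0 : 0 ≤ V := ENNReal.toReal_nonneg
  have hVs : ∀ ε : ℝ, (volume.restrict (softPart ε Ω D0) univ).toReal ≤ V := fun ε =>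
    ENNReal.toReal_mono (measure_ne_top _ _) (hsub ε univ)
  have hVt : ∀ ε : ℝ, (volume.restrict (stiffPart ε Ω D0) univ).toReal ≤ V := fun ε =>
    ENNReal.toReal_mono (measure_ne_top _ _) (hsub1 ε univ)
  have hvfree : ∀ ε : ℝ, 0 < ε → AFreeOn A Ω (fun x => u ε x - ut ε x) := by
    intro ε hε ψ hψ
    have hψL := memLp_adjApply A Ω hψ (ENNReal.ofReal (conjExp p))
    have i1 := integrable_dot hp (huU ε hε).1 hψL
    have i2 := integrable_dot hp (hut ε hε).1 hψL
    simp only [dot_sub_left]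
    rw [integral_sub i1 i2, (huU ε hε).2 ψ hψ, (hut ε hε).2 ψ hψ, sub_zero]
  have hvU : ∀ ε : ℝ, 0 < ε → (fun x => u ε x - ut ε x) ∈ U1 p A Ω := fun ε hε =>
    ⟨MemLp.sub (huU ε hε).1 (hut ε hε).1, hvfree ε hε⟩
  have hpos : ∀ᶠ ε in 𝓝[>] (0 : ℝ), 0 < ε := self_mem_nhdsWithin
  have hid : Tendsto (fun ε : ℝ => ε) (𝓝[>] (0 : ℝ)) (𝓝 0) :=
    tendsto_nhdsWithin_of_tendsto_nhds tendsto_id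
  have hle1 : ∀ᶠ ε in 𝓝[>] (0 : ℝ), ε ≤ 1 := hid.eventually_le_const one_pos
  have heqT : ∀ ε : ℝ, 0 < ε → ∫ x in stiffPart ε Ω D0, f1 (ε⁻¹ • x) (u ε x) =
      ∫ x in stiffPart ε Ω D0, f1 (ε⁻¹ • x) (ut ε x) := by
    intro ε hε
    refine integral_congr_ae ?_
    filter_upwards [heq ε hε] with x hx
    rw [hx]
  -- the three energies
  set S : ℝ → ℝ := fun ε => ∫ x in softPart ε Ω D0, f0 ε (ε • u ε x) with hSdef
  set S' : ℝ → ℝ := fun ε => ∫ x in softPart ε Ω D0, f0 ε (ε • (u ε x - ut ε x)) with hSdef'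
  set T : ℝ → ℝ := fun ε => ∫ x in stiffPart ε Ω D0, f1 (ε⁻¹ • x) (ut ε x) with hTdef
  have hFS : ∀ ε : ℝ, 0 < ε → Feps p A Ω D0 f0 f1 ε (u ε) = ((S ε + T ε : ℝ) : EReal) := by
    intro ε hε
    rw [Feps, if_pos (huU ε hε), heqT ε hε]
  have hF0 : ∀ ε : ℝ, 0 < ε → F0eps p A Ω D0 f0 ε (fun x => u ε x - ut ε x) =
      ((S' ε : ℝ) : EReal) := by
    intro ε hε
    rw [F0eps, if_pos (hvU ε hε)]
  have hF1 : ∀ ε : ℝ, 0 < ε → F1eps p A Ω D0 f1 ε (ut ε) = ((T ε : ℝ) : EReal) := by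
    intro ε hε
    rw [F1eps, if_pos (show ut ε ∈ U1 p A Ω from hut ε hε)]
  have hsum : ∀ ε : ℝ, 0 < ε → S ε + T ε ≤ c := by
    intro ε hε
    have := hbd ε hε
    rw [hFS ε hε] at this
    exact EReal.coe_le_coe_iff.1 this
  have hla : 0 ≤ lam * a := by positivity
  have hlow0 : ∀ ε : ℝ, 0 < ε → ∀ ξ : Vec N, -(lam * a) ≤ f0 ε ξ := by
    intro ε hε ξ
    have := (h3s ε hε ξ).1
    have h0 : 0 ≤ lam * eN ξ ^ p := mul_nonneg hlam.le (Real.rpow_nonneg (eN_nonneg _) _)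
    linarith
  have hlow1 : ∀ (x : Rd d) (ξ : Vec N), -(lam * a) ≤ f1 x ξ := by
    intro x ξ
    have := (h3t x ξ).1
    have h0 : 0 ≤ lam * eN ξ ^ p := mul_nonneg hlam.le (Real.rpow_nonneg (eN_nonneg _) _)
    linarith
  have hSl : ∀ ε : ℝ, 0 < ε → -(lam * a * V) ≤ S ε := fun ε hε =>
    integral_lower hla (hVs ε) fun x => hlow0 ε hε _
  have hTl : ∀ ε : ℝ, 0 < ε → -(lam * a * V) ≤ T ε := fun ε hε =>
    integral_lower hla (hVt ε) fun x => hlow1 _ _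
  -- bound on the soft part
  have hub : ∀ ε : ℝ, 0 < ε → ∫ x in softPart ε Ω D0, eN (ε • u ε x) ^ p ≤
      a * V + (c + lam * a * V) / lam := by
    intro ε hε
    have hm : MemLp (fun x => ε • u ε x) (ENNReal.ofReal p) (volume.restrict (softPart ε Ω D0)) :=
      MemLp.const_smul ((huU ε hε).1.mono_measure (hsub ε)) ε
    have i1 := soft_integrable (Lam := Lam) hp (h1.1 ε hε) hlam ha (h3s ε hε) hm
    have i2 := integrable_eN hp hm
    have i3 : Integrable (fun x => -a + eN (ε • u ε x) ^ p)
      (volume.restrict (softPart ε Ω D0)) := (integrable_const _).add i2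
    have h6 : ∫ x in softPart ε Ω D0, lam * (-a + eN (ε • u ε x) ^ p) ≤ S ε :=
      integral_mono (i3.const_mul lam) i1 fun x => (h3s ε hε _).1
    rw [integral_const_mul, integral_add (integrable_const _) i2] at h6
    simp only [integral_const, smul_eq_mul, Measure.real] at h6
    have h7 : S ε ≤ c + lam * a * V := by linarith [hTl ε hε, hsum ε hε]
    have h8 := h6.trans h7
    have h9 : a * (volume.restrict (softPart ε Ω D0) univ).toReal ≤ a * V := by
      gcongr; exact hVs ε
    rw [← le_div_iff₀' hlam] at h8
    linarith
  obtain ⟨C, hC⟩ := eventually_bounded hp (fun ε hε => (hut ε hε).1) hutw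
  have hr : Tendsto (fun ε => S ε - S' ε) (𝓝[>] (0 : ℝ)) (𝓝 0) := by
    have hlim : Tendsto (fun ε : ℝ => ε * (mu * (3 * (3 ^ p + 1)) *
        (V + (a * V + (c + lam * a * V) / lam) + C))) (𝓝[>] (0 : ℝ)) (𝓝 0) := by
      simpa using hid.mul_const (mu * (3 * (3 ^ p + 1)) *
        (V + (a * V + (c + lam * a * V) / lam) + C))
    refine squeeze_zero_norm' ?_ hlim
    filter_upwards [hpos, hle1, hC] with ε hε hε1 hCε
    have hm1 : MemLp (u ε) (ENNReal.ofReal p) (volume.restrict (softPart ε Ω D0)) :=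
      (huU ε hε).1.mono_measure (hsub ε)
    have hm2 : MemLp (ut ε) (ENNReal.ofReal p) (volume.restrict (softPart ε Ω D0)) :=
      (hut ε hε).1.mono_measure (hsub ε)
    have h6 := soft_diff (Lam := Lam) hp hε hε1 (h1.1 ε hε) hlam ha (h3s ε hε) hmu (h4s ε hε)
      hm1 hm2
    rw [Real.norm_eq_abs]
    refine h6.trans ?_
    have h7 : ∫ x in softPart ε Ω D0, eN (ut ε x) ^ p ≤ C :=
      (integral_mono_measure (hsub ε)
        (Eventually.of_forall fun x => Real.rpow_nonneg (eN_nonneg _) _)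
        (integrable_eN hp (hut ε hε).1)).trans hCε
    have h8 := hub ε hε
    have h9 := hVs ε
    have h10 : (0:ℝ) ≤ 3 ^ p := by positivity
    gcongr
  have hTb : ∀ᶠ ε in 𝓝[>] (0 : ℝ), |T ε| ≤ |c| + lam * a * V + 1 := by
    filter_upwards [hpos] with ε hε
    have := hTl ε hε
    have := hSl ε hε
    have := hsum ε hε
    have := le_abs_self c
    have := abs_nonneg c
    rw [abs_le]
    constructor <;> linarith
  have hSb : ∀ᶠ ε in 𝓝[>] (0 : ℝ), |S' ε| ≤ |c| + lam * a * V + 1 := by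
    filter_upwards [hpos, hr.abs.eventually_le_const (by simp : |(0:ℝ)| < 1)] with ε hε hre
    have := hTl ε hε
    have := hSl ε hε
    have := hsum ε hε
    have := le_abs_self c
    have := abs_nonneg c
    rw [abs_le] at hre ⊢
    constructor <;> linarith
  have hsplit := split_limits hSb hTb hr
  have c0 : (fun ε => F0eps p A Ω D0 f0 ε (fun x => u ε x - ut ε x)) =ᶠ[𝓝[>] (0 : ℝ)]
      fun ε => ((S' ε : ℝ) : EReal) := hpos.mono hF0
  have c1 : (fun ε => F1eps p A Ω D0 f1 ε (ut ε)) =ᶠ[𝓝[>] (0 : ℝ)]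
      fun ε => ((T ε : ℝ) : EReal) := hpos.mono hF1
  have c2 : (fun ε => Feps p A Ω D0 f0 f1 ε (u ε)) =ᶠ[𝓝[>] (0 : ℝ)]
      fun ε => ((S ε + T ε : ℝ) : EReal) := hpos.mono hFS
  refine ⟨?_, ?_, hvfree, ?_, ?_, ?_⟩
  · intro ψ hψ
    have hψL := memLp_adjApply A Ω hψ (ENNReal.ofReal (conjExp p))
    refine tendsto_nhds_unique (hutw _ hψL) ?_
    refine tendsto_const_nhds.congr' ?_
    filter_upwards [hpos] with ε hε
    exact ((hut ε hε).2 ψ hψ).symm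
  · intro ε hε
    filter_upwards [heq ε hε] with x hx
    rw [hx, sub_self]
  · intro g hg
    have t1 := hu0 g hg
    have t2 := hid.mul (hutw g hg)
    have t3 := t1.sub t2
    rw [zero_mul, sub_zero] at t3
    refine t3.congr' ?_
    filter_upwards [hpos] with ε hε
    have i1 := integrable_dot hp (huU ε hε).1 hg
    have i2 := integrable_dot hp (hut ε hε).1 hg
    simp only [dot_smul_left, dot_sub_left, integral_const_mul]
    rw [integral_sub i1 i2]
    ring
  · rw [liminf_congr c0, liminf_congr c1, liminf_congr c2]
    exact hsplit.1
  · rw [limsup_congr c0, limsup_congr c1, limsup_congr c2]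
    exact hsplit.2

end HC
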